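/- arXiv:2408.14046 — 2 statements merged into one kernel-verified Lean document; each statement's English description precedes it below -/
import Mathlib

section
/- Let q be a prime power, let n_0 ≤ n be positive integers, let g ∈ GL(n_0, F_q), and let χ be an irreducible complex character of GL(n, F_q). Then the algebraic number χ(g) · q^{C(n,2) − C(n−n_0,2)} · ∏_{i=0}^{n_0−1} (q^{n−i} − 1) / χ(1) is an algebraic integer, where C(m,2) = m(m−1)/2. -/
open Matrix

noncomputable def blockOneHom (F : Type*) [Field F] (n₀ n : ℕ) (h : n₀ ≤ n) :
    Matrix (Fin n₀) (Fin n₀) F →* Matrix (Fin n) (Fin n) F :=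
  (Matrix.reindexAlgEquiv F F
      ((finSumFinEquiv (m := n₀) (n := n - n₀)).trans
        (finCongr (Nat.add_sub_cancel' h)))).toAlgHom.toMonoidHom.comp
    { toFun := fun A => Matrix.fromBlocks A 0 0 (1 : Matrix (Fin (n - n₀)) (Fin (n - n₀)) F)
      map_one' := by simp [Matrix.fromBlocks_one]
      map_mul' := fun A B => by
        simp [Matrix.fromBlocks_multiply] }

noncomputable def glEmbed {F : Type*} [Field F] {n₀ n : ℕ} (h : n₀ ≤ n) :
    GL (Fin n₀) F →* GL (Fin n) F :=
  Units.map (blockOneHom F n₀ n h)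

def IsIrrChar (G : Type) [Group G] (f : G → ℂ) : Prop :=
  ∃ V : FDRep ℂ G, CategoryTheory.Simple V ∧ FDRep.character V = f

/-- `d` divides the algebraic number `z`, i.e. `z / d` is an algebraic integer. -/
def NatDvdAlg (d : ℕ) (z : ℂ) : Prop := IsIntegral ℤ (z / (d : ℂ))

/-!
If `C` is the conjugacy class of `x` and `V` is irreducible, the class sum `∑ y ∈ C, ρ y` is
integral over `ℤ`, being the image of an element of the finite `ℤ`-algebra `ℤ[G]`, and it is a
scalar by Schur's lemma. Comparing traces, the scalar is `|C| χ(x) / χ(1)`. Since `|C|` is the index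
of the centralizer of `x`, also `[G : H] χ(x) / χ(1)` is an algebraic integer for every subgroup `H`
centralizing `x`. For `x = diag(g, I)` in `GL n`, take `H` to be the subgroup of matrices
`diag(I, k)`, a copy of `GL (n - n₀)`, whose index is the factor in the theorem.
-/

lemma isIntegral_sum_monoidHom {M A : Type*} [Monoid M] [Finite M] [Ring A] (s : Finset M)
    (φ : M →* A) : IsIntegral ℤ (∑ y ∈ s, φ y) := by
  have integral_in_monoidAlgebra : IsIntegral ℤ (∑ y ∈ s, MonoidAlgebra.of ℤ M y) :=
    IsIntegral.of_finite ℤ _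
  simpa only [map_sum, MonoidAlgebra.lift_of] using
    integral_in_monoidAlgebra.map (MonoidAlgebra.lift ℤ A M φ)

lemma commute_sum_monoidHom_of_conj_mem {G A : Type*} [Group G] [Semiring A] {s : Finset G}
    (hs : ∀ g, ∀ y ∈ s, g * y * g⁻¹ ∈ s) (φ : G →* A) (g : G) :
    Commute (∑ y ∈ s, φ y) (φ g) := by
  have hs' : ∀ y ∈ s, g⁻¹ * y * g ∈ s := fun y hy ↦ by simpa using hs g⁻¹ y hy
  rw [commute_iff_eq, Finset.sum_mul, Finset.mul_sum]
  refine Finset.sum_bij' (fun y _ ↦ g⁻¹ * y * g) (fun y _ ↦ g * y * g⁻¹) hs' (hs g)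
    (fun y _ ↦ by group) (fun y _ ↦ by group) fun y _ ↦ ?_
  rw [← map_mul, ← map_mul]
  group

lemma index_centralizer_singleton_eq_ncard_isConj {G : Type*} [Group G] (x : G) :
    (Subgroup.centralizer {x}).index = {y | IsConj x y}.ncard := by
  have orbit_eq : MulAction.orbit (ConjAct G) x = {y | IsConj x y} := by
    ext y
    rw [ConjAct.mem_orbit_conjAct, isConj_comm, Set.mem_ofPred_eq]
  calc (Subgroup.centralizer {x}).index
      = (MulAction.stabilizer (ConjAct G) x).index := by
        rw [Subgroup.centralizer_eq_comap_stabilizer]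
        exact Subgroup.index_comap_of_surjective _ ConjAct.toConjAct.surjective
    _ = {y | IsConj x y}.ncard := by
        rw [MulAction.index_stabilizer, orbit_eq]

section CentralCharacter

open CategoryTheory

universe u v

variable {k : Type u} {G : Type v} [Field k] [IsAlgClosed k] [Group G] (V : FDRep k G) [Simple V]

lemma exists_eq_algebraMap_of_commute_rho {T : Module.End k V}
    (hT : ∀ g, Commute T (V.ρ g)) : ∃ c : k, T = algebraMap k (Module.End k V) c := by
  let f : V ⟶ V := ⟨InducedCategory.homMk (ModuleCat.ofHom T), fun g ↦ by
    ext x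
    exact LinearMap.congr_fun (hT g) x⟩
  obtain ⟨c, hc⟩ := endomorphism_simple_eq_smul_id k f
  exact ⟨c, congrArg (fun φ : V ⟶ V ↦ φ.hom.hom.hom) hc.symm⟩

lemma isIntegral_sum_character_div_character_one [Finite G] {s : Finset G}
    (hs : ∀ g, ∀ y ∈ s, g * y * g⁻¹ ∈ s) :
    IsIntegral ℤ ((∑ y ∈ s, V.character y) / V.character 1) := by
  -- Over a field whose characteristic divides `dim V` the quotient is `_ / 0 = 0`.
  by_cases hdim : V.character 1 = 0
  · simpa only [hdim, div_zero] using isIntegral_zero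
  obtain ⟨c, hc⟩ := exists_eq_algebraMap_of_commute_rho V
    (commute_sum_monoidHom_of_conj_mem hs V.ρ)
  have trace_eq : ∑ y ∈ s, V.character y = c * V.character 1 := by
    calc ∑ y ∈ s, V.character y = LinearMap.trace k V (∑ y ∈ s, V.ρ y) := (map_sum ..).symm
      _ = c * V.character 1 := by
        rw [hc, Algebra.algebraMap_eq_smul_one, map_smul, LinearMap.trace_one, V.char_one,
          smul_eq_mul]
  have : Nontrivial V := by
    refine Module.nontrivial_of_finrank_pos (R := k) (Nat.pos_of_ne_zero fun h ↦ hdim ?_)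
    rw [V.char_one, h, Nat.cast_zero]
  rw [trace_eq, mul_div_cancel_right₀ c hdim,
    ← isIntegral_algebraMap_iff (algebraMap k (Module.End k V)).injective, ← hc]
  exact isIntegral_sum_monoidHom s V.ρ

lemma isIntegral_index_centralizer_mul_character_div_character_one [Finite G] (x : G) :
    IsIntegral ℤ ((Subgroup.centralizer {x}).index * V.character x / V.character 1) := by
  classical
  have := Fintype.ofFinite G
  let C : Finset G := {y | IsConj x y}
  have C_conj_mem : ∀ g, ∀ y ∈ C, g * y * g⁻¹ ∈ C := fun g y hy ↦ by
    simp only [C, Finset.mem_filter_univ] at hy ⊢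
    exact hy.trans (isConj_iff.2 ⟨g, rfl⟩)
  have character_eq : ∀ y ∈ C, V.character y = V.character x := fun y hy ↦ by
    obtain ⟨g, rfl⟩ := isConj_iff.1 ((Finset.mem_filter_univ y).1 hy)
    exact V.char_conj x g
  have card_C : C.card = (Subgroup.centralizer {x}).index := by
    rw [index_centralizer_singleton_eq_ncard_isConj, ← Set.ncard_coe_finset,
      Finset.coe_filter_univ]
  simpa only [Finset.sum_congr rfl character_eq, Finset.sum_const, card_C, nsmul_eq_mul] using
    isIntegral_sum_character_div_character_one V C_conj_mem

lemma isIntegral_index_mul_character_div_character_one [Finite G] {x : G} {H : Subgroup G}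
    (hH : H ≤ Subgroup.centralizer {x}) :
    IsIntegral ℤ (H.index * V.character x / V.character 1) := by
  obtain ⟨m, hm⟩ := Subgroup.index_dvd_of_le hH
  rw [hm, Nat.cast_mul, mul_comm (Nat.cast _), mul_assoc, mul_div_assoc]
  exact (isIntegral_natCast m).mul
    (isIntegral_index_centralizer_mul_character_div_character_one V x)

end CentralCharacter

section BlockDiagonal

variable {l m n R : Type*} [CommRing R] [Fintype l] [DecidableEq l] [Fintype m] [DecidableEq m]
  [Fintype n] [DecidableEq n]

/-- The block-diagonal embedding `(A, B) ↦ diag(A, B)` of `GL m × GL n` into `GL l`, for an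
identification `e` of `l` with the disjoint union of `m` and `n`; the elements `diag(A, 1)` and
`diag(1, B)` commute because they come from the two factors. -/
def blockDiagGL (e : m ⊕ n ≃ l) : GL m R × GL n R →* GL l R :=
  (Units.map
    { toFun := fun P ↦ reindexAlgEquiv R R e (fromBlocks P.1 0 0 P.2)
      map_one' := by simp
      map_mul' := fun P Q ↦ by simp [fromBlocks_multiply] }).comp
    MulEquiv.prodUnits.symm.toMonoidHom

lemma blockDiagGL_injective (e : m ⊕ n ≃ l) :
    Function.Injective (blockDiagGL (R := R) e) := by
  rintro ⟨A, B⟩ ⟨A', B'⟩ hAB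
  have blocks_eq : fromBlocks (A : Matrix m m R) 0 0 (B : Matrix n n R) = fromBlocks A' 0 0 B' :=
    (reindexAlgEquiv R R e).injective (congrArg Units.val hAB)
  obtain ⟨hA, -, -, hB⟩ := fromBlocks_inj.1 blocks_eq
  exact Prod.ext (Units.ext hA) (Units.ext hB)

/-- The subgroup of `GL l` of matrices `diag(1, B)` with `B` in `GL n`, for an identification `e`
of `l` with the disjoint union of `m` and `n`. It serves as a large subgroup centralizing every
`diag(A, 1)`. -/
def lowerBlockGL (R : Type*) [CommRing R] (e : m ⊕ n ≃ l) : Subgroup (GL l R) :=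
  ((blockDiagGL e).comp (MonoidHom.inr (GL m R) (GL n R))).range

lemma card_lowerBlockGL (e : m ⊕ n ≃ l) : Nat.card (lowerBlockGL R e) = Nat.card (GL n R) :=
  Nat.card_range_of_injective ((blockDiagGL_injective e).comp (Prod.mk_right_injective 1))

lemma lowerBlockGL_le_centralizer (e : m ⊕ n ≃ l) (A : GL m R) :
    lowerBlockGL R e ≤ Subgroup.centralizer {blockDiagGL e (A, 1)} := by
  rintro _ ⟨B, rfl⟩
  rw [Subgroup.mem_centralizer_singleton_iff]
  exact (MonoidHom.commute_inl_inr A B).symm.map (blockDiagGL e)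

end BlockDiagonal

section Cardinality

variable {F : Type*} [Field F] [Fintype F]

lemma card_GL_eq_pow_choose_two_mul_prod (n : ℕ) :
    Nat.card (GL (Fin n) F) = Fintype.card F ^ n.choose 2 *
      ∏ i ∈ Finset.range n, (Fintype.card F ^ (n - i) - 1) := by
  rw [card_GL_field, Fin.prod_univ_eq_prod_range fun i ↦ Fintype.card F ^ n - Fintype.card F ^ i,
    Nat.choose_two_right, ← Finset.sum_range_id, ← Finset.prod_pow_eq_pow_sum,
    ← Finset.prod_mul_distrib]
  refine Finset.prod_congr rfl fun i hi ↦ ?_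
  rw [Nat.mul_sub, mul_one, ← pow_add, Nat.add_sub_cancel' (Finset.mem_range.1 hi).le]

lemma card_GL_add_eq_card_GL_mul (n₀ m : ℕ) :
    Nat.card (GL (Fin (n₀ + m)) F) = Nat.card (GL (Fin m) F) *
      (Fintype.card F ^ ((n₀ + m).choose 2 - m.choose 2) *
        ∏ i ∈ Finset.range n₀, (Fintype.card F ^ (n₀ + m - i) - 1)) := by
  have choose_le : m.choose 2 ≤ (n₀ + m).choose 2 := Nat.choose_le_choose 2 (Nat.le_add_left m n₀)
  simp only [card_GL_eq_pow_choose_two_mul_prod, Finset.prod_range_add, Nat.add_sub_add_left]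
  rw [← pow_mul_pow_sub _ choose_le]
  ring

lemma index_lowerBlockGL {n₀ m n : ℕ} (e : Fin n₀ ⊕ Fin m ≃ Fin n) :
    (lowerBlockGL F e).index = Fintype.card F ^ (n.choose 2 - m.choose 2) *
      ∏ i ∈ Finset.range n₀, (Fintype.card F ^ (n - i) - 1) := by
  obtain rfl : n₀ + m = n := by simpa using Fintype.card_congr e
  refine Nat.eq_of_mul_eq_mul_left (Nat.card_pos (α := GL (Fin m) F)) ?_
  rw [← card_GL_add_eq_card_GL_mul, ← card_lowerBlockGL e, Subgroup.card_mul_index]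

end Cardinality

lemma glEmbed_eq_blockDiagGL {F : Type*} [Field F] {n₀ n : ℕ} (h : n₀ ≤ n) (g : GL (Fin n₀) F) :
    glEmbed h g =
      blockDiagGL (finSumFinEquiv.trans (finCongr (Nat.add_sub_cancel' h))) (g, 1) :=
  rfl

theorem character_value_ratio_is_integral_general {k F : Type*} [Field k] [IsAlgClosed k]
    [Field F] [Fintype F] {n₀ n : ℕ} (h : n₀ ≤ n) (g : GL (Fin n₀) F)
    (V : FDRep k (GL (Fin n) F)) [CategoryTheory.Simple V] :
    IsIntegral ℤ
      (V.character (glEmbed h g) * (Fintype.card F : k) ^ (n.choose 2 - (n - n₀).choose 2) *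
        (∏ i ∈ Finset.range n₀, ((Fintype.card F : k) ^ (n - i) - 1)) / V.character 1) := by
  have cast_factor (i : ℕ) : ((Fintype.card F ^ (n - i) - 1 : ℕ) : k) =
      (Fintype.card F : k) ^ (n - i) - 1 := by
    rw [Nat.cast_pred (pow_pos Fintype.card_pos _), Nat.cast_pow]
  have integral := isIntegral_index_mul_character_div_character_one V
    (lowerBlockGL_le_centralizer (finSumFinEquiv.trans (finCongr (Nat.add_sub_cancel' h))) g)
  rw [← glEmbed_eq_blockDiagGL, index_lowerBlockGL, mul_comm] at integral
  simpa only [Nat.cast_mul, Nat.cast_pow, Nat.cast_prod, cast_factor, mul_assoc] using integral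

theorem character_value_ratio_is_integral
    (q : ℕ) (hq : IsPrimePow q)
    (F : Type) [Field F] [Fintype F] (hFq : Fintype.card F = q)
    (n₀ n : ℕ) (hn₀ : 0 < n₀) (h : n₀ ≤ n) (g : GL (Fin n₀) F)
    (χ : GL (Fin n) F → ℂ) (hχ : IsIrrChar _ χ) :
    IsIntegral ℤ
      (χ (glEmbed h g) * (q : ℂ) ^ (n.choose 2 - (n - n₀).choose 2) *
        (∏ i ∈ Finset.range n₀, ((q : ℂ) ^ (n - i) - 1)) / χ 1) := by
  obtain ⟨V, hV, rfl⟩ := hχ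
  subst hFq
  exact character_value_ratio_is_integral_general h g V
end

section
/- Let q be an odd prime power and let λ be a partition of n. Then v_2(d_λ(q)) ≥ v_2(𝔣_λ), where d_λ(q) = q^{α(λ)} · (∏_{i=1}^{n} (q^i − 1)) / (∏_{h ∈ H(λ)} (q^{|h|} − 1)). -/
/-- The `i`-th part (0-indexed, parts in weakly decreasing order) of the partition whose
multiset of parts is `lam`; `0` if `i` is at least the number of parts. -/
def partNth (lam : Multiset ℕ) (i : ℕ) : ℕ :=
  ((lam.sort (· ≤ ·)).reverse.getD i 0)

/-- The `j`-th part (0-indexed) of the conjugate partition: the number of parts `> j`. -/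
def conjNth (lam : Multiset ℕ) (j : ℕ) : ℕ :=
  (lam.filter (fun m => j < m)).card

/-- The cells `(i, j)` (0-indexed) of the Young diagram of `lam`. -/
def cellsOf (lam : Multiset ℕ) : Finset (ℕ × ℕ) :=
  (Finset.range (Multiset.card lam) ×ˢ Finset.range lam.sum).filter
    (fun c => c.2 < partNth lam c.1)

/-- The hook length of the cell `c = (i, j)` of `lam`:
`(λᵢ − j) + (λ'ⱼ − i) − 1`. -/
def hookLen (lam : Multiset ℕ) (c : ℕ × ℕ) : ℕ :=
  (partNth lam c.1 - c.2) + (conjNth lam c.2 - c.1) - 1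

/-- The product of all hook lengths of `lam`. -/
def hookProd (lam : Multiset ℕ) : ℕ :=
  ∏ c ∈ cellsOf lam, hookLen lam c

/-- `α(λ) = Σᵢ (i − 1)·λᵢ` (1-indexed), i.e. `Σᵢ i·λᵢ` for the 0-indexed parts. -/
def alphaStat (lam : Multiset ℕ) : ℕ :=
  ∑ i ∈ Finset.range (Multiset.card lam), i * partNth lam i

/-- `𝔣_λ = n! / ∏_{h ∈ H(λ)} |h|`, the degree of the irreducible character of `S_n`
indexed by `λ`, as a rational number. -/
def fDeg (lam : Multiset ℕ) : ℚ :=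
  (Nat.factorial lam.sum : ℚ) / (hookProd lam : ℚ)

/-- `d_λ(x) = x^{α(λ)} · ∏_{i=1}^{n} (x^i − 1) / ∏_{h ∈ H(λ)} (x^{|h|} − 1)`. -/
def dDeg (lam : Multiset ℕ) (x : ℕ) : ℚ :=
  (x : ℚ) ^ alphaStat lam * (∏ i ∈ Finset.Icc 1 lam.sum, ((x : ℚ) ^ i - 1)) /
    ∏ c ∈ cellsOf lam, ((x : ℚ) ^ hookLen lam c - 1)

/-!
For odd `x > 1` and `h > 0`, lifting the exponent gives
`v₂(x ^ h - 1) = v₂(x - 1) + v₂(h)`, plus the constant `v₂(x + 1) - 1 ≥ 0` when `h` is even.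
A partition of `n` has exactly `n` hooks, so the terms `v₂(x - 1)` cancel in `d_λ(x)`, and
`v₂(d_λ(x)) - v₂(𝔣_λ) = (v₂(x + 1) - 1) * (⌊n / 2⌋ - k)`, where `k` is the number of even hooks.

It remains to see that at most half of the hooks are even. With `ℓ` the number of parts and
`e = ∑ i, (-1) ^ (λᵢ + i)`, removing the first row and inducting shows that
`2 * ∑ h, (-1) ^ |h| = -e * (e + (-1) ^ ℓ)`, and a product of two integers that differ by one
is nonnegative.
-/

open Finset

/-! ### Removing the largest part -/

theorem multiset_induction_on_max {α : Type*} [LinearOrder α] {motive : Multiset α → Prop}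
    (zero : motive 0)
    (cons : ∀ a s, (∀ b ∈ s, b ≤ a) → motive s → motive (a ::ₘ s)) (s : Multiset α) :
    motive s := by
  suffices ∀ l : List α, l.Pairwise (· ≥ ·) → motive l by
    simpa only [Multiset.sort_eq] using this _ (s.pairwise_sort (· ≥ ·))
  intro l hl
  induction hl with
  | nil => exact zero
  | cons hle _ ih => exact cons _ _ hle ih

section LargestPart

variable {a : ℕ} {μ : Multiset ℕ}

theorem partNth_eq_getD_sort_ge (lam : Multiset ℕ) (i : ℕ) :
    partNth lam i = (lam.sort (· ≥ ·)).getD i 0 := by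
  have hsort : (lam.sort (· ≤ ·)).reverse = lam.sort (· ≥ ·) :=
    List.Perm.eq_of_pairwise' (List.pairwise_reverse.2 (lam.pairwise_sort _))
      (lam.pairwise_sort _) (Multiset.coe_eq_coe.1 (by simp))
  rw [partNth, hsort]

theorem partNth_cons_zero (ha : ∀ b ∈ μ, b ≤ a) : partNth (a ::ₘ μ) 0 = a := by
  rw [partNth_eq_getD_sort_ge, Multiset.sort_cons a μ _ ha, List.getD_cons_zero]

theorem partNth_cons_succ (ha : ∀ b ∈ μ, b ≤ a) (i : ℕ) :
    partNth (a ::ₘ μ) (i + 1) = partNth μ i := by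
  rw [partNth_eq_getD_sort_ge, Multiset.sort_cons a μ _ ha, List.getD_cons_succ,
    partNth_eq_getD_sort_ge]

theorem partNth_mem {lam : Multiset ℕ} {i : ℕ} (hi : i < lam.card) : partNth lam i ∈ lam := by
  have hlen : i < (lam.sort (· ≥ ·)).length := by rwa [Multiset.length_sort]
  rw [partNth_eq_getD_sort_ge, List.getD_eq_getElem _ _ hlen]
  exact (Multiset.mem_sort _).1 (List.getElem_mem hlen)

theorem partNth_eq_zero {lam : Multiset ℕ} {i : ℕ} (hi : lam.card ≤ i) : partNth lam i = 0 := by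
  rw [partNth_eq_getD_sort_ge, List.getD_eq_default _ _ (by rwa [Multiset.length_sort])]

theorem partNth_le (ha : ∀ b ∈ μ, b ≤ a) (i : ℕ) : partNth μ i ≤ a := by
  rcases lt_or_ge i μ.card with hi | hi
  · exact ha _ (partNth_mem hi)
  · simp [partNth_eq_zero hi]

theorem conjNth_cons_of_lt {j : ℕ} (hj : j < a) : conjNth (a ::ₘ μ) j = conjNth μ j + 1 := by
  simp [conjNth, hj]

theorem conjNth_eq_zero {j : ℕ} (hj : ∀ b ∈ μ, b ≤ j) : conjNth μ j = 0 := by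
  simpa [conjNth, Multiset.filter_eq_nil] using hj

theorem lt_card_of_lt_partNth {lam : Multiset ℕ} {i j : ℕ} (hj : j < partNth lam i) :
    i < lam.card := by
  by_contra! hi
  simp [partNth_eq_zero hi] at hj

theorem mem_cellsOf {lam : Multiset ℕ} {c : ℕ × ℕ} :
    c ∈ cellsOf lam ↔ c.2 < partNth lam c.1 := by
  simp only [cellsOf, mem_filter, mem_product, mem_range, and_iff_right_iff_imp]
  intro hc
  have hrow := lt_card_of_lt_partNth hc
  exact ⟨hrow, hc.trans_le (Multiset.le_sum_of_mem (partNth_mem hrow))⟩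

theorem sum_cellsOf {M : Type*} [AddCommMonoid M] (lam : Multiset ℕ) (f : ℕ × ℕ → M) :
    ∑ c ∈ cellsOf lam, f c =
      ∑ i ∈ range lam.card, ∑ j ∈ range (partNth lam i), f (i, j) :=
  sum_finset_product _ _ _ fun _ ↦ by
    simpa only [mem_cellsOf, mem_range] using (and_iff_right_of_imp lt_card_of_lt_partNth).symm

theorem sum_cellsOf_cons {M : Type*} [AddCommMonoid M] (ha : ∀ b ∈ μ, b ≤ a) (f : ℕ × ℕ → M) :
    ∑ c ∈ cellsOf (a ::ₘ μ), f c =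
      ∑ j ∈ range a, f (0, j) + ∑ c ∈ cellsOf μ, f (c.1 + 1, c.2) := by
  simp only [sum_cellsOf, Multiset.card_cons, sum_range_succ', partNth_cons_zero ha,
    partNth_cons_succ ha, add_comm]

theorem card_cellsOf (lam : Multiset ℕ) : #(cellsOf lam) = lam.sum := by
  induction lam using multiset_induction_on_max with
  | zero => rfl
  | cons a μ ha ih =>
    rw [card_eq_sum_ones, sum_cellsOf_cons ha, ← card_eq_sum_ones, ← card_eq_sum_ones, ih,
      card_range, Multiset.sum_cons]

theorem hookLen_cons_zero (ha : ∀ b ∈ μ, b ≤ a) {j : ℕ} (hj : j < a) :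
    hookLen (a ::ₘ μ) (0, j) = a - j + conjNth μ j := by
  simp only [hookLen, partNth_cons_zero ha, conjNth_cons_of_lt hj]
  omega

theorem hookLen_cons_succ (ha : ∀ b ∈ μ, b ≤ a) {c : ℕ × ℕ} (hc : c ∈ cellsOf μ) :
    hookLen (a ::ₘ μ) (c.1 + 1, c.2) = hookLen μ c := by
  have hj : c.2 < a := (mem_cellsOf.1 hc).trans_le (partNth_le ha c.1)
  simp only [hookLen, partNth_cons_succ ha, conjNth_cons_of_lt hj]
  omega

theorem hookLen_pos {lam : Multiset ℕ} {c : ℕ × ℕ} (hc : c ∈ cellsOf lam) :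
    0 < hookLen lam c := by
  induction lam using multiset_induction_on_max generalizing c with
  | zero => simp [cellsOf] at hc
  | cons a μ ha ih =>
    obtain ⟨_ | i, j⟩ := c
    · rw [mem_cellsOf, partNth_cons_zero ha] at hc
      rw [hookLen_cons_zero ha hc]
      omega
    · rw [mem_cellsOf, partNth_cons_succ ha] at hc
      rw [hookLen_cons_succ ha (mem_cellsOf.2 hc : (i, j) ∈ cellsOf μ)]
      exact ih (mem_cellsOf.2 hc)

/-! ### The signed count of hooks -/

/-- The signed count of the rows of `lam`, the row `i` having the sign `(-1) ^ (λᵢ + i)`. Up to a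
global sign it is the difference between the numbers of even and odd first-column hook lengths. -/
def rowSignSum (lam : Multiset ℕ) : ℤ :=
  ∑ i ∈ range lam.card, (-1) ^ (partNth lam i + i)

theorem rowSignSum_cons (ha : ∀ b ∈ μ, b ≤ a) :
    rowSignSum (a ::ₘ μ) = (-1) ^ a - rowSignSum μ := by
  simp only [rowSignSum, Multiset.card_cons, sum_range_succ', partNth_cons_zero ha,
    partNth_cons_succ ha, ← add_assoc, pow_succ, mul_neg_one, sum_neg_distrib, add_zero]
  ring

theorem two_mul_sum_range_neg_one_pow (m : ℕ) :
    2 * ∑ j ∈ range m, (-1 : ℤ) ^ j = 1 - (-1) ^ m := by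
  linear_combination -geom_sum_mul (-1 : ℤ) m

theorem sum_range_neg_one_pow_add_conjNth_cons (ha : ∀ b ∈ μ, b ≤ a) (t : ℕ) :
    ∑ j ∈ range (a + t), (-1 : ℤ) ^ (j + conjNth (a ::ₘ μ) j) =
      (-1) ^ a * ∑ j ∈ range t, (-1) ^ j - ∑ j ∈ range a, (-1) ^ (j + conjNth μ j) := by
  rw [sum_range_add, add_comm, sub_eq_add_neg, ← sum_neg_distrib, mul_sum]
  congr 1 <;> refine sum_congr rfl fun j hj ↦ ?_
  · have hzero : conjNth (a ::ₘ μ) (a + j) = 0 :=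
      conjNth_eq_zero (by simpa using fun b hb ↦ (ha b hb).trans (Nat.le_add_right a j))
    rw [hzero, add_zero, pow_add]
  · rw [conjNth_cons_of_lt (mem_range.1 hj), ← add_assoc, pow_succ, mul_neg_one]

/-- With `ℓ` the number of parts, the numbers `λᵢ + ℓ - 1 - i` for `i < ℓ` and `j + ℓ - λ'ⱼ` for
`j < m` partition `{0, …, ℓ + m - 1}`, so the signs of the rows determine those of the columns. -/
theorem two_mul_sum_range_neg_one_pow_add_conjNth {lam : Multiset ℕ} {m : ℕ}
    (hm : ∀ b ∈ lam, b ≤ m) :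
    2 * ∑ j ∈ range m, (-1 : ℤ) ^ (j + conjNth lam j) =
      2 * rowSignSum lam + (-1) ^ lam.card - (-1) ^ m := by
  induction lam using multiset_induction_on_max generalizing m with
  | zero => simpa [conjNth, rowSignSum] using two_mul_sum_range_neg_one_pow m
  | cons a μ ha ih =>
    obtain ⟨t, rfl⟩ := Nat.exists_eq_add_of_le (hm a (Multiset.mem_cons_self a μ))
    rw [sum_range_neg_one_pow_add_conjNth_cons ha, rowSignSum_cons ha, Multiset.card_cons,
      pow_add, pow_succ]
    linear_combination (-1) ^ a * two_mul_sum_range_neg_one_pow t - ih ha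

theorem sum_range_neg_one_pow_hookLen_cons_zero (ha : ∀ b ∈ μ, b ≤ a) :
    ∑ j ∈ range a, (-1 : ℤ) ^ hookLen (a ::ₘ μ) (0, j) =
      (-1) ^ a * ∑ j ∈ range a, (-1) ^ (j + conjNth μ j) := by
  rw [mul_sum]
  refine sum_congr rfl fun j hj ↦ ?_
  have hja := mem_range.1 hj
  have hsub : (-1 : ℤ) ^ (a - j) = (-1) ^ a * (-1) ^ j := by
    rw [← pow_add, ← Nat.sub_add_cancel hja.le, Nat.add_sub_cancel, add_assoc, ← two_mul,
      pow_add, pow_mul, neg_one_sq, one_pow, mul_one]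
  rw [hookLen_cons_zero ha hja, pow_add, pow_add, hsub, mul_assoc]

theorem two_mul_sum_neg_one_pow_hookLen (lam : Multiset ℕ) :
    2 * ∑ c ∈ cellsOf lam, (-1 : ℤ) ^ hookLen lam c =
      -(rowSignSum lam * (rowSignSum lam + (-1) ^ lam.card)) := by
  induction lam using multiset_induction_on_max with
  | zero => rfl
  | cons a μ ha ih =>
    have hrest : ∑ c ∈ cellsOf μ, (-1 : ℤ) ^ hookLen (a ::ₘ μ) (c.1 + 1, c.2) =
        ∑ c ∈ cellsOf μ, (-1) ^ hookLen μ c :=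
      sum_congr rfl fun c hc ↦ by rw [hookLen_cons_succ ha hc]
    rw [sum_cellsOf_cons ha, sum_range_neg_one_pow_hookLen_cons_zero ha, hrest,
      rowSignSum_cons ha, Multiset.card_cons, pow_succ]
    linear_combination ih + (-1) ^ a * two_mul_sum_range_neg_one_pow_add_conjNth ha

theorem sum_neg_one_pow_hookLen_nonpos (lam : Multiset ℕ) :
    ∑ c ∈ cellsOf lam, (-1 : ℤ) ^ hookLen lam c ≤ 0 := by
  have hsum := two_mul_sum_neg_one_pow_hookLen lam
  have hnonneg : 0 ≤ rowSignSum lam * (rowSignSum lam + (-1) ^ lam.card) := by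
    rcases neg_one_pow_eq_or ℤ lam.card with hsign | hsign <;> rw [hsign] <;>
      rcases lt_trichotomy (rowSignSum lam) 0 with hlt | heq | hgt <;> nlinarith
  linarith

end LargestPart

theorem sum_neg_one_pow_eq_two_mul_card_even_sub_card {ι : Type*} (s : Finset ι) (f : ι → ℕ) :
    ∑ i ∈ s, (-1 : ℤ) ^ f i = 2 * #{i ∈ s | Even (f i)} - #s := by
  have hterm (i : ι) : (-1 : ℤ) ^ f i = 2 * (if Even (f i) then 1 else 0) - 1 := by
    rw [neg_one_pow_eq_ite]
    split_ifs <;> rfl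
  simp only [hterm, sum_sub_distrib, ← mul_sum, sum_boole, sum_const, nsmul_eq_mul, mul_one]

theorem card_even_hookLen_le (lam : Multiset ℕ) :
    #{c ∈ cellsOf lam | Even (hookLen lam c)} ≤ lam.sum / 2 := by
  have hsum := sum_neg_one_pow_hookLen_nonpos lam
  rw [sum_neg_one_pow_eq_two_mul_card_even_sub_card, card_cellsOf] at hsum
  omega

/-! ### Valuations -/

theorem padicValRat_prod {p : ℕ} [Fact p.Prime] {ι : Type*} {s : Finset ι} {f : ι → ℚ}
    (hf : ∀ i ∈ s, f i ≠ 0) :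
    padicValRat p (∏ i ∈ s, f i) = ∑ i ∈ s, padicValRat p (f i) := by
  induction s using Finset.cons_induction with
  | empty => simp
  | cons a s ha ih =>
    rw [forall_mem_cons] at hf
    rw [prod_cons, sum_cons, padicValRat.mul hf.1 (prod_ne_zero_iff.2 hf.2), ih hf.2]

theorem padicValNat_pow_sub_pow_of_not_dvd {p : ℕ} [hp : Fact p.Prime] {x y n : ℕ}
    (hyx : y ≤ x) (hxy : p ∣ x - y) (hx : ¬p ∣ x) (hn : ¬p ∣ n) :
    padicValNat p (x ^ n - y ^ n) = padicValNat p (x - y) := by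
  have hxy' : (p : ℤ) ∣ x - y := by
    rw [← Nat.cast_sub hyx]
    exact Int.natCast_dvd_natCast.2 hxy
  have hemult := emultiplicity_pow_sub_pow_of_prime (Nat.prime_iff_prime_int.1 hp.out) hxy'
    (mt Int.natCast_dvd_natCast.1 hx) (mt Int.natCast_dvd_natCast.1 hn)
  rw [← Nat.cast_pow, ← Nat.cast_pow, ← Nat.cast_sub (Nat.pow_le_pow_left hyx n),
    ← Nat.cast_sub hyx, Int.natCast_emultiplicity, Int.natCast_emultiplicity] at hemult
  rw [← Nat.toNat_emultiplicity, hemult, Nat.toNat_emultiplicity]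

theorem card_even_Icc_one (n : ℕ) : #{i ∈ Icc 1 n | Even i} = n / 2 := by
  simp only [even_iff_two_dvd]
  exact Nat.Ioc_filter_dvd_card_eq_div n 2

theorem prod_Icc_one_eq_factorial (n : ℕ) : ∏ i ∈ Icc 1 n, i = n.factorial := by
  induction n with
  | zero => rfl
  | succ n ih => rw [prod_Icc_succ_top (Nat.le_add_left 1 n), ih, Nat.factorial_succ, mul_comm]

theorem pow_sub_one_ne_zero_of_one_lt {R : Type*} [Ring R] [LinearOrder R] [IsStrictOrderedRing R]
    {x : R} (hx : 1 < x) {n : ℕ} (hn : n ≠ 0) : x ^ n - 1 ≠ 0 :=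
  sub_ne_zero.2 (one_lt_pow₀ hx hn).ne'

section OddBase

variable {x : ℕ}

theorem padicValRat_two_pow_sub_one (hx : 1 < x) (hodd : Odd x) {h : ℕ} (hh : h ≠ 0) :
    padicValRat 2 ((x : ℚ) ^ h - 1) = padicValNat 2 (x - 1) + padicValRat 2 h +
      if Even h then (padicValNat 2 (x + 1) : ℤ) - 1 else 0 := by
  have hcast : (x : ℚ) ^ h - 1 = ((x ^ h - 1 : ℕ) : ℚ) := by
    rw [Nat.cast_sub (Nat.one_le_pow _ _ (by omega)), Nat.cast_pow, Nat.cast_one]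
  rw [hcast, padicValRat.of_nat, padicValRat.of_nat]
  split_ifs with heven
  · have hlte := padicValNat.pow_two_sub_one hx hodd.not_two_dvd_nat hh heven
    omega
  · have hdvd : ¬2 ∣ h := by rwa [← even_iff_two_dvd]
    have hval := padicValNat_pow_sub_pow_of_not_dvd hx.le (hodd.tsub_odd odd_one).two_dvd
      hodd.not_two_dvd_nat hdvd
    rw [one_pow] at hval
    rw [hval, padicValNat.eq_zero_of_not_dvd hdvd, Nat.cast_zero, add_zero, add_zero]

theorem padicValRat_two_prod_pow_sub_one (hx : 1 < x) (hodd : Odd x) {ι : Type*} {s : Finset ι}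
    {f : ι → ℕ} (hf : ∀ i ∈ s, f i ≠ 0) :
    padicValRat 2 (∏ i ∈ s, ((x : ℚ) ^ f i - 1)) =
      #s * padicValNat 2 (x - 1) + padicValRat 2 (∏ i ∈ s, f i : ℕ) +
        (padicValNat 2 (x + 1) - 1) * #{i ∈ s | Even (f i)} := by
  have hx' : (1 : ℚ) < x := Nat.one_lt_cast.2 hx
  rw [Nat.cast_prod, padicValRat_prod fun i hi ↦ pow_sub_one_ne_zero_of_one_lt hx' (hf i hi),
    padicValRat_prod fun i hi ↦ Nat.cast_ne_zero.2 (hf i hi),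
    sum_congr rfl fun i hi ↦ padicValRat_two_pow_sub_one hx hodd (hf i hi),
    sum_add_distrib, sum_add_distrib, sum_const, nsmul_eq_mul, ← sum_filter, sum_const,
    nsmul_eq_mul, mul_comm (#{i ∈ s | Even (f i)} : ℤ)]

theorem padicValRat_two_prod_Icc_pow_sub_one (hx : 1 < x) (hodd : Odd x) (n : ℕ) :
    padicValRat 2 (∏ i ∈ Icc 1 n, ((x : ℚ) ^ i - 1)) =
      n * padicValNat 2 (x - 1) + padicValRat 2 (n.factorial : ℕ) +
        (padicValNat 2 (x + 1) - 1) * (n / 2 : ℕ) := by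
  have hne : ∀ i ∈ Icc 1 n, i ≠ 0 := fun i hi ↦ Nat.one_le_iff_ne_zero.1 (mem_Icc.1 hi).1
  rw [padicValRat_two_prod_pow_sub_one hx hodd hne, prod_Icc_one_eq_factorial, card_even_Icc_one,
    Nat.card_Icc, Nat.add_sub_cancel]

theorem padicValRat_two_dDeg (hx : 1 < x) (hodd : Odd x) (lam : Multiset ℕ) :
    padicValRat 2 (dDeg lam x) = padicValRat 2 (fDeg lam) + (padicValNat 2 (x + 1) - 1) *
      ((lam.sum / 2 : ℕ) - #{c ∈ cellsOf lam | Even (hookLen lam c)}) := by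
  have hhook : ∀ c ∈ cellsOf lam, hookLen lam c ≠ 0 := fun c hc ↦ (hookLen_pos hc).ne'
  have hx' : (1 : ℚ) < x := Nat.one_lt_cast.2 hx
  have hpow : (x : ℚ) ^ alphaStat lam ≠ 0 := by positivity
  have hval : padicValNat 2 x = 0 := padicValNat.eq_zero_of_not_dvd hodd.not_two_dvd_nat
  have hnum : ∏ i ∈ Icc 1 lam.sum, ((x : ℚ) ^ i - 1) ≠ 0 :=
    prod_ne_zero_iff.2 fun i hi ↦
      pow_sub_one_ne_zero_of_one_lt hx' (Nat.one_le_iff_ne_zero.1 (mem_Icc.1 hi).1)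
  have hden : ∏ c ∈ cellsOf lam, ((x : ℚ) ^ hookLen lam c - 1) ≠ 0 :=
    prod_ne_zero_iff.2 fun c hc ↦ pow_sub_one_ne_zero_of_one_lt hx' (hhook c hc)
  have hfact : (lam.sum.factorial : ℚ) ≠ 0 := Nat.cast_ne_zero.2 (Nat.factorial_ne_zero _)
  have hprod : (hookProd lam : ℚ) ≠ 0 := Nat.cast_ne_zero.2 (prod_ne_zero_iff.2 hhook)
  rw [dDeg, fDeg, padicValRat.div (mul_ne_zero hpow hnum) hden, padicValRat.mul hpow hnum,
    padicValRat.pow, padicValRat.of_nat, hval, padicValRat.div hfact hprod,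
    padicValRat_two_prod_Icc_pow_sub_one hx hodd, padicValRat_two_prod_pow_sub_one hx hodd hhook,
    card_cellsOf, ← hookProd]
  ring

theorem two_adic_valuation_ge_general (hx : 1 < x) (hodd : Odd x) (lam : Multiset ℕ) :
    padicValRat 2 (fDeg lam) ≤ padicValRat 2 (dDeg lam x) := by
  have hval : 1 ≤ padicValNat 2 (x + 1) :=
    one_le_padicValNat_of_dvd x.succ_ne_zero hodd.add_one.two_dvd
  rw [padicValRat_two_dDeg hx hodd, le_add_iff_nonneg_right]
  refine mul_nonneg ?_ (sub_nonneg.2 ?_)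
  · omega
  · exact_mod_cast card_even_hookLen_le lam

end OddBase

theorem two_adic_valuation_ge
    (q : ℕ) (hq : IsPrimePow q) (hodd : Odd q)
    (n : ℕ) (lam : n.Partition) :
    padicValRat 2 (fDeg lam.parts) ≤ padicValRat 2 (dDeg lam.parts q) :=
  two_adic_valuation_ge_general hq.one_lt hodd lam.parts
end
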